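/- Let m(ξ) = (iξ)^γ |ξ|^β P(ξ) e^{−|ξ|^{2α}} on ℝ², where |γ| = k, P(ξ) is smooth and homogeneous of degree 0 away from the origin (e.g., P_{ab}(ξ) = δ_{ab} − ξ_aξ_b/|ξ|²), α > 0, and β + k > −2. Then K := F^{−1}(m) satisfies the pointwise bound |K(x)| ≤ C(α,β,k)(1+|x|)^{−(2+β+k)} for all x ∈ ℝ². -/

import Mathlib

open MeasureTheory
open scoped FourierTransform

noncomputable section

abbrev E2 := EuclideanSpace ℝ (Fin 2)

/-- The multiplier `m(ξ) = (iξ)^γ |ξ|^β P(ξ) e^{−|ξ|^{2α}}` with multi-index `γ`. -/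
def mSymb (γ : Fin 2 → ℕ) (β α : ℝ) (P : E2 → ℂ) (ξ : E2) : ℂ :=
  (∏ i : Fin 2, (Complex.I * (ξ i : ℂ)) ^ γ i) * ((‖ξ‖ ^ β : ℝ) : ℂ) * P ξ *
    Complex.exp (-((‖ξ‖ ^ (2 * α) : ℝ) : ℂ))

/-!
Symbol estimates of order `d` are invariant under `f ↦ R ^ d • f (R⁻¹ • ·)`, which on the Fourier
side maps the sphere of radius `R` to the unit sphere at the cost of the factor `R ^ (D + d)`, where
`D` is the dimension. It therefore suffices to bound `𝓕⁻ f` on the unit sphere by a constant that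
depends only on the constants in the symbol estimates. Split `f` at frequency `1`. The low
frequencies are absolutely integrable because `-D < d`. At high frequencies, `N` integrations by
parts cost nothing on the unit sphere and replace `f` by derivatives of size `‖ξ‖ ^ (d - N)`, which
are integrable once `d - N < -D`. The exponential factor makes the multiplier a symbol of every
smaller order as well; this enters only qualitatively, to justify the integrations by parts.
-/

open Filter Module Topology
open scoped ContDiff

section Symbols

variable {V F : Type*} [NormedAddCommGroup V] [NormedSpace ℝ V]
  [NormedAddCommGroup F] [NormedSpace ℝ F]

/-- The `L^∞`-normalized dilation `x ↦ R ^ d • f (x / R)`, which fixes the functions that are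
positively homogeneous of degree `d`. -/
def rescale (d R : ℝ) (f : V → F) (x : V) : F := R ^ d • f (R⁻¹ • x)

/-- Symbol (Mikhlin-type) estimates of order `d` away from the origin, `‖D^n f(x)‖ ≤ C n ‖x‖^(d-n)`.
The constants are part of the data, so that bounds can be stated uniformly over families. -/
structure HasSymbolBounds (d : ℝ) (C : ℕ → ℝ) (f : V → F) : Prop where
  contDiffOn : ContDiffOn ℝ ∞ f {0}ᶜ
  norm_iteratedFDeriv_le : ∀ n : ℕ, ∀ x ≠ 0, ‖iteratedFDeriv ℝ n f x‖ ≤ C n * ‖x‖ ^ (d - n)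

theorem iteratedFDeriv_comp_smul_of_ne_zero {c : ℝ} (hc : c ≠ 0) (f : V → F) (n : ℕ) (x : V) :
    iteratedFDeriv ℝ n (fun y => f (c • y)) x = c ^ n • iteratedFDeriv ℝ n f (c • x) := by
  let e : V ≃L[ℝ] V := ContinuousLinearEquiv.smulLeft (Units.mk0 c hc)
  have h := e.iteratedFDerivWithin_comp_right (f := f) uniqueDiffOn_univ (Set.mem_univ (e x)) n
  rw [Set.preimage_univ, iteratedFDerivWithin_univ, iteratedFDerivWithin_univ] at h
  refine h.trans (ContinuousMultilinearMap.ext fun v => ?_)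
  change iteratedFDeriv ℝ n f (c • x) (fun i => c • v i) = c ^ n • iteratedFDeriv ℝ n f (c • x) v
  simpa using (iteratedFDeriv ℝ n f (c • x)).map_smul_univ (fun _ => c) v

theorem rescale_eq_rpow_smul_rescale (d e : ℝ) {R : ℝ} (hR : 0 < R) (f : V → F) :
    rescale d R f = R ^ (d - e) • rescale e R f := by
  ext x
  rw [Pi.smul_apply, rescale, rescale, smul_smul, ← Real.rpow_add hR, sub_add_cancel]

theorem norm_iteratedFDeriv_rescale {f : V → F} (d : ℝ) {R : ℝ} (hR : 0 < R) {n : ℕ} {x : V}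
    (hf : ContDiffAt ℝ n f (R⁻¹ • x)) :
    ‖iteratedFDeriv ℝ n (rescale d R f) x‖ =
      R ^ (d - n) * ‖iteratedFDeriv ℝ n f (R⁻¹ • x)‖ := by
  have hsmooth : ContDiffAt ℝ n (fun y => f (R⁻¹ • y)) x :=
    hf.comp x (contDiff_const_smul R⁻¹).contDiffAt
  have hR' : 0 ≤ R ^ d * R⁻¹ ^ n := by positivity
  unfold rescale
  rw [iteratedFDeriv_const_smul_apply' hsmooth,
    iteratedFDeriv_comp_smul_of_ne_zero (inv_ne_zero hR.ne'), smul_smul, norm_smul,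
    Real.norm_of_nonneg hR', Real.rpow_sub_natCast hR.ne', inv_pow, div_eq_mul_inv]

namespace HasSymbolBounds

variable {d d₁ d₂ : ℝ} {C C₁ C₂ : ℕ → ℝ} {f g : V → F}

theorem contDiffAt (hf : HasSymbolBounds d C f) {x : V} (hx : x ≠ 0) : ContDiffAt ℝ ∞ f x :=
  hf.contDiffOn.contDiffAt (isOpen_compl_singleton.mem_nhds hx)

theorem norm_le (hf : HasSymbolBounds d C f) {x : V} (hx : x ≠ 0) : ‖f x‖ ≤ C 0 * ‖x‖ ^ d := by
  simpa using hf.norm_iteratedFDeriv_le 0 x hx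

protected theorem sub (hf : HasSymbolBounds d C₁ f) (hg : HasSymbolBounds d C₂ g) :
    HasSymbolBounds d (C₁ + C₂) (f - g) where
  contDiffOn := hf.contDiffOn.sub hg.contDiffOn
  norm_iteratedFDeriv_le n x hx := by
    have hn : (n : ℕ∞ω) ≤ ∞ := mod_cast le_top
    rw [iteratedFDeriv_sub_apply ((hf.contDiffAt hx).of_le hn)
      ((hg.contDiffAt hx).of_le hn), Pi.add_apply, add_mul]
    exact (norm_sub_le _ _).trans
      (add_le_add (hf.norm_iteratedFDeriv_le n x hx) (hg.norm_iteratedFDeriv_le n x hx))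

protected theorem const_smul (hf : HasSymbolBounds d C f) (c : ℝ) :
    HasSymbolBounds d (fun n => |c| * C n) (c • f) where
  contDiffOn := hf.contDiffOn.const_smul c
  norm_iteratedFDeriv_le n x hx := by
    rw [iteratedFDeriv_const_smul_apply
      ((hf.contDiffAt hx).of_le (mod_cast le_top)), norm_smul,
      Real.norm_eq_abs, mul_assoc]
    gcongr
    exact hf.norm_iteratedFDeriv_le n x hx

protected theorem smul {a : V → ℝ} (ha : HasSymbolBounds d₁ C₁ a) (hf : HasSymbolBounds d₂ C₂ f) :
    HasSymbolBounds (d₁ + d₂)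
      (fun n => ∑ i ∈ Finset.range (n + 1), n.choose i * C₁ i * C₂ (n - i))
      (fun x => a x • f x) where
  contDiffOn := ha.contDiffOn.smul hf.contDiffOn
  norm_iteratedFDeriv_le n x hx := by
    have hpos : 0 < ‖x‖ := norm_pos_iff.mpr hx
    have hopen : IsOpen ({0}ᶜ : Set V) := isOpen_compl_singleton
    have leibniz := norm_iteratedFDerivWithin_smul_le ha.contDiffOn hf.contDiffOn
      hopen.uniqueDiffOn hx (n := n) (mod_cast le_top)
    simp only [iteratedFDerivWithin_of_isOpen _ hopen (Set.mem_compl_singleton_iff.mpr hx)]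
      at leibniz
    refine leibniz.trans ?_
    rw [Finset.sum_mul]
    refine Finset.sum_le_sum fun i hi => ?_
    have hin : i ≤ n := Finset.mem_range_succ_iff.mp hi
    have ha_le := ha.norm_iteratedFDeriv_le i x hx
    have hf_le := hf.norm_iteratedFDeriv_le (n - i) x hx
    have hpow : ‖x‖ ^ (d₁ + d₂ - n) = ‖x‖ ^ (d₁ - i) * ‖x‖ ^ (d₂ - (n - i : ℕ)) := by
      rw [← Real.rpow_add hpos, Nat.cast_sub hin]
      ring_nf
    calc (n.choose i : ℝ) * ‖iteratedFDeriv ℝ i a x‖ * ‖iteratedFDeriv ℝ (n - i) f x‖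
        ≤ n.choose i * (C₁ i * ‖x‖ ^ (d₁ - i)) * (C₂ (n - i) * ‖x‖ ^ (d₂ - (n - i : ℕ))) := by
          have := (norm_nonneg _).trans ha_le
          gcongr
      _ = n.choose i * C₁ i * C₂ (n - i) * ‖x‖ ^ (d₁ + d₂ - n) := by rw [hpow]; ring

protected theorem rescale (hf : HasSymbolBounds d C f) {R : ℝ} (hR : 0 < R) :
    HasSymbolBounds d C (rescale d R f) where
  contDiffOn x hx :=
    (((hf.contDiffAt (smul_ne_zero (inv_ne_zero hR.ne') hx)).comp x
      (contDiff_const_smul R⁻¹).contDiffAt).const_smul (R ^ d)).contDiffWithinAt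
  norm_iteratedFDeriv_le n x hx := by
    have hx' : R⁻¹ • x ≠ 0 := smul_ne_zero (inv_ne_zero hR.ne') hx
    rw [norm_iteratedFDeriv_rescale d hR ((hf.contDiffAt hx').of_le (mod_cast le_top))]
    calc R ^ (d - n) * ‖iteratedFDeriv ℝ n f (R⁻¹ • x)‖
        ≤ R ^ (d - n) * (C n * ‖R⁻¹ • x‖ ^ (d - n)) := by
          gcongr
          exact hf.norm_iteratedFDeriv_le n _ hx'
      _ = C n * ‖x‖ ^ (d - n) := by
          rw [norm_smul, norm_inv, Real.norm_of_nonneg hR.le, mul_left_comm,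
            ← Real.mul_rpow hR.le (by positivity), mul_inv_cancel_left₀ hR.ne']

theorem exists_of_homogeneous [ProperSpace V] (hf : ContDiffOn ℝ ∞ f {0}ᶜ)
    (hhom : ∀ c : ℝ, 0 < c → ∀ x ≠ 0, f (c • x) = c ^ d • f x) :
    ∃ C, HasSymbolBounds d C f := by
  have smooth_at {x : V} (hx : x ≠ 0) : ContDiffAt ℝ ∞ f x :=
    hf.contDiffAt (isOpen_compl_singleton.mem_nhds hx)
  have bounded_on_sphere (n : ℕ) :
      ∃ M : ℝ, ∀ y ∈ Metric.sphere (0 : V) 1, ‖iteratedFDeriv ℝ n f y‖ ≤ M := by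
    refine (isCompact_sphere _ _).exists_bound_of_continuousOn fun y hy => ?_
    have hy0 : y ≠ 0 := ne_zero_of_mem_unit_sphere ⟨y, hy⟩
    exact ((smooth_at hy0).iteratedFDeriv_right (m := 0) (i := n)
      (by rw [zero_add]; exact mod_cast le_top)).continuousAt.continuousWithinAt
  choose M hM using bounded_on_sphere
  refine ⟨M, hf, fun n x hx => ?_⟩
  have hpos : 0 < ‖x‖ := norm_pos_iff.mpr hx
  have hfix : f =ᶠ[𝓝 x] rescale d ‖x‖ f := by
    filter_upwards [isOpen_compl_singleton.mem_nhds hx] with y hy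
    rw [rescale, hhom _ (inv_pos.mpr hpos) y hy, smul_smul,
      ← Real.mul_rpow hpos.le (inv_nonneg.mpr hpos.le), mul_inv_cancel₀ hpos.ne', Real.one_rpow,
      one_smul]
  have hx' : ‖x‖⁻¹ • x ≠ 0 := smul_ne_zero (inv_ne_zero hpos.ne') hx
  rw [(hfix.iteratedFDeriv ℝ n).eq_of_nhds,
    norm_iteratedFDeriv_rescale d hpos ((smooth_at hx').of_le (mod_cast le_top)), mul_comm]
  gcongr
  exact hM n _ (by simp [norm_smul, hpos.ne'])

theorem exists_of_hasCompactSupport (hf : ContDiff ℝ ∞ f) (hsupp : HasCompactSupport f)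
    (hd : d ≤ 0) : ∃ C, HasSymbolBounds d C f := by
  have weighted_bound (n : ℕ) :
      ∃ M, ∀ x : V, ‖‖x‖ ^ (n - d) * ‖iteratedFDeriv ℝ n f x‖‖ ≤ M := by
    have hweight : Continuous fun x : V => ‖x‖ ^ (n - d) :=
      continuous_norm.rpow_const fun _ => .inr (sub_nonneg.mpr (hd.trans n.cast_nonneg))
    have hderiv : HasCompactSupport fun x => ‖iteratedFDeriv ℝ n f x‖ :=
      (hsupp.iteratedFDeriv (𝕜 := ℝ) n).norm
    exact hderiv.mul_left.exists_bound_of_continuous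
      (hweight.mul (hf.continuous_iteratedFDeriv (mod_cast le_top)).norm)
  choose M hM using weighted_bound
  refine ⟨M, hf.contDiffOn, fun n x hx => ?_⟩
  have hpos : 0 < ‖x‖ := norm_pos_iff.mpr hx
  rw [← neg_sub, Real.rpow_neg hpos.le, ← div_eq_mul_inv, le_div_iff₀' (by positivity)]
  exact (Real.le_norm_self _).trans (hM n x)

end HasSymbolBounds

end Symbols

section ExponentialDamping

theorem exists_exp_neg_mul_one_add_pow_mul_rpow_le (n : ℕ) {q : ℝ} (hq : 0 ≤ q) :
    ∃ B : ℝ, ∀ s : ℝ, 0 ≤ s → Real.exp (-s) * (1 + s) ^ n * s ^ q ≤ B := by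
  obtain ⟨m, hm⟩ := exists_nat_ge q
  refine ⟨(n + m).factorial * Real.exp 1, fun s hs => ?_⟩
  have hpow : s ^ q ≤ (1 + s) ^ m :=
    calc s ^ q ≤ (1 + s) ^ q := by gcongr; linarith
      _ ≤ (1 + s) ^ (m : ℝ) := Real.rpow_le_rpow_of_exponent_le (by linarith) hm
      _ = (1 + s) ^ m := Real.rpow_natCast _ _
  have htaylor : (1 + s) ^ (n + m) ≤ (n + m).factorial * Real.exp (1 + s) :=
    (div_le_iff₀' (by positivity)).mp (Real.pow_div_factorial_le_exp (1 + s) (by linarith) (n + m))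
  calc Real.exp (-s) * (1 + s) ^ n * s ^ q
      ≤ Real.exp (-s) * (1 + s) ^ n * (1 + s) ^ m := by gcongr
    _ = Real.exp (-s) * (1 + s) ^ (n + m) := by ring
    _ ≤ Real.exp (-s) * ((n + m).factorial * Real.exp (1 + s)) := by gcongr
    _ = (n + m).factorial * Real.exp 1 := by
      rw [mul_left_comm, ← Real.exp_add]
      ring_nf

theorem norm_iteratedFDeriv_exp_neg (n : ℕ) (s : ℝ) :
    ‖iteratedFDeriv ℝ n (fun s : ℝ => Real.exp (-s)) s‖ = Real.exp (-s) := by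
  have h : iteratedDeriv n (fun s : ℝ => Real.exp (-s)) s = (-1) ^ n * Real.exp (-s) := by
    simpa using congrFun (iteratedDeriv_exp_const_mul n (-1)) s
  simp [norm_iteratedFDeriv_eq_norm_iteratedDeriv, h]

variable {V : Type*} [NormedAddCommGroup V]

theorem HasSymbolBounds.exists_norm_iteratedFDeriv_exp_neg_le [NormedSpace ℝ V] {p : ℝ}
    {C : ℕ → ℝ} {φ : V → ℝ} (hφ : HasSymbolBounds p C φ) (n : ℕ) :
    ∃ A, 0 ≤ A ∧ ∀ x ≠ 0, ‖iteratedFDeriv ℝ n (fun x => Real.exp (-φ x)) x‖ ≤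
      A * (Real.exp (-φ x) * (1 + ‖x‖ ^ p) ^ n * ‖x‖ ^ (-n : ℝ)) := by
  obtain ⟨M, hM⟩ := (insert 1 ((Finset.range (n + 1)).image C)).exists_le
  have one_le_M : 1 ≤ M := hM 1 (Finset.mem_insert_self _ _)
  have C_le_M {i : ℕ} (hi : i ≤ n) : C i ≤ M :=
    hM _ (Finset.mem_insert_of_mem (Finset.mem_image_of_mem C (Finset.mem_range_succ_iff.mpr hi)))
  refine ⟨n.factorial * M ^ n, by positivity, fun x hx => ?_⟩
  have hpos : 0 < ‖x‖ := norm_pos_iff.mpr hx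
  have hopen : IsOpen ({0}ᶜ : Set V) := isOpen_compl_singleton
  have hmem : x ∈ ({0}ᶜ : Set V) := hx
  have hexp : ContDiff ℝ ∞ fun s : ℝ => Real.exp (-s) := by fun_prop
  have inner_bound (i : ℕ) (hi₁ : 1 ≤ i) (hin : i ≤ n) :
      ‖iteratedFDerivWithin ℝ i φ {0}ᶜ x‖ ≤ (M * (1 + ‖x‖ ^ p) * ‖x‖⁻¹) ^ i := by
    have hi₀ : i ≠ 0 := Nat.one_le_iff_ne_zero.mp hi₁
    have hxp : 0 ≤ ‖x‖ ^ p := by positivity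
    rw [iteratedFDerivWithin_of_isOpen _ hopen hmem]
    calc ‖iteratedFDeriv ℝ i φ x‖ ≤ C i * ‖x‖ ^ (p - i) := hφ.norm_iteratedFDeriv_le i x hx
      _ = C i * ‖x‖ ^ p * ‖x‖⁻¹ ^ i := by
        rw [Real.rpow_sub_natCast hpos.ne', inv_pow, div_eq_mul_inv, mul_assoc]
      _ ≤ M ^ i * (1 + ‖x‖ ^ p) ^ i * ‖x‖⁻¹ ^ i := by
        gcongr
        · exact (C_le_M hin).trans (le_self_pow₀ one_le_M hi₀)
        · exact (le_add_of_nonneg_left zero_le_one).trans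
            (le_self_pow₀ (le_add_of_nonneg_right hxp) hi₀)
      _ = (M * (1 + ‖x‖ ^ p) * ‖x‖⁻¹) ^ i := by rw [mul_pow, mul_pow]
  have faa_di_bruno := norm_iteratedFDerivWithin_comp_le (n := n) hexp.contDiffOn hφ.contDiffOn
    (mod_cast le_top) uniqueDiffOn_univ hopen.uniqueDiffOn (Set.mapsTo_univ _ _) hmem
    (fun i _ => by rw [iteratedFDerivWithin_univ, norm_iteratedFDeriv_exp_neg]) inner_bound
  rw [iteratedFDerivWithin_of_isOpen _ hopen hmem] at faa_di_bruno
  refine faa_di_bruno.trans_eq ?_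
  rw [Real.rpow_neg hpos.le, Real.rpow_natCast, mul_pow, mul_pow, inv_pow]
  ring

variable [InnerProductSpace ℝ V]

theorem contDiffOn_norm_rpow (p : ℝ) : ContDiffOn ℝ ∞ (fun x : V => ‖x‖ ^ p) {0}ᶜ := fun _ hx =>
  ((contDiffAt_norm ℝ hx).rpow_const_of_ne (norm_ne_zero_iff.mpr hx)).contDiffWithinAt

variable [FiniteDimensional ℝ V]

theorem exists_hasSymbolBounds_norm_rpow (p : ℝ) :
    ∃ C, HasSymbolBounds p C fun x : V => ‖x‖ ^ p :=
  HasSymbolBounds.exists_of_homogeneous (contDiffOn_norm_rpow p) fun c hc x _ => by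
    rw [norm_smul, Real.norm_of_nonneg hc.le, Real.mul_rpow hc.le (norm_nonneg x), smul_eq_mul]

theorem exists_hasSymbolBounds_exp_neg_norm_rpow {p e : ℝ} (hp : 0 < p) (he : e ≤ 0) :
    ∃ C, HasSymbolBounds e C fun x : V => Real.exp (-‖x‖ ^ p) := by
  obtain ⟨C, hC⟩ := exists_hasSymbolBounds_norm_rpow (V := V) p
  choose A hA hbound using hC.exists_norm_iteratedFDeriv_exp_neg_le
  choose B hB using fun n =>
    exists_exp_neg_mul_one_add_pow_mul_rpow_le n (div_nonneg (neg_nonneg.mpr he) hp.le)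
  refine ⟨fun n => A n * B n, Real.contDiff_exp.comp_contDiffOn hC.contDiffOn.neg,
    fun n x hx => (hbound n x hx).trans ?_⟩
  have hpos : 0 < ‖x‖ := norm_pos_iff.mpr hx
  have hpow : (‖x‖ ^ p) ^ (-e / p) = ‖x‖ ^ (-e) := by
    rw [← Real.rpow_mul hpos.le, mul_div_cancel₀ _ hp.ne']
  have hsplit : ‖x‖ ^ (-n : ℝ) = ‖x‖ ^ (-e) * ‖x‖ ^ (e - n) := by
    rw [← Real.rpow_add hpos]
    ring_nf
  have hdamp := hB n (‖x‖ ^ p) (by positivity)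
  rw [hpow] at hdamp
  rw [hsplit, ← mul_assoc _ (‖x‖ ^ (-e)), mul_assoc (A n)]
  gcongr
  exact hA n

end ExponentialDamping

section FrequencySplitting

variable {V F : Type*} [NormedAddCommGroup V] [InnerProductSpace ℝ V] [NormedAddCommGroup F]
  [NormedSpace ℝ F] {d : ℝ} {C : ℕ → ℝ} {f : V → F} {ξ : V}

/-- The frequency cutoff: a smooth bump function equal to `1` on the unit ball and supported in the
ball of radius `2`. -/
def unitBump (V : Type*) [NormedAddCommGroup V] : ContDiffBump (0 : V) :=
  ⟨1, 2, one_pos, one_lt_two⟩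

/-- The part of a symbol `f` at frequencies `‖ξ‖ ≲ 1`. -/
def lowFrequency (f : V → F) (ξ : V) : F := unitBump V ξ • f ξ

/-- The part of a symbol `f` at frequencies `‖ξ‖ ≳ 1`. -/
def highFrequency (f : V → F) : V → F := f - lowFrequency f

theorem highFrequency_eq_zero_of_norm_le_one (f : V → F) (hξ : ‖ξ‖ ≤ 1) :
    highFrequency f ξ = 0 := by
  have hone : unitBump V ξ = 1 :=
    (unitBump V).one_of_mem_closedBall (mem_closedBall_zero_iff.mpr hξ)
  simp [highFrequency, lowFrequency, hone]

theorem norm_lowFrequency_le_indicator (f : V → F) (ξ : V) :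
    ‖lowFrequency f ξ‖ ≤ (Metric.ball (0 : V) 2).indicator (fun ξ => ‖f ξ‖) ξ := by
  rw [lowFrequency, norm_smul, Real.norm_of_nonneg (unitBump V).nonneg]
  by_cases hξ : ξ ∈ Metric.ball (0 : V) 2
  · rw [Set.indicator_of_mem hξ]
    exact mul_le_of_le_one_left (norm_nonneg _) (unitBump V).le_one
  · have hzero : unitBump V ξ = 0 := (unitBump V).zero_of_le_dist (not_lt.mp hξ)
    simp [hzero, hξ]

theorem HasSymbolBounds.contDiff_highFrequency (hf : HasSymbolBounds d C f) :
    ContDiff ℝ ∞ (highFrequency f) := by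
  refine contDiff_iff_contDiffAt.mpr fun ξ => ?_
  rcases eq_or_ne ξ 0 with rfl | hξ
  · refine (contDiffAt_const (c := (0 : F))).congr_of_eventuallyEq ?_
    filter_upwards [Metric.closedBall_mem_nhds (0 : V) one_pos] with η hη
    exact highFrequency_eq_zero_of_norm_le_one f (mem_closedBall_zero_iff.mp hη)
  · exact (hf.contDiffAt hξ).sub ((unitBump V).contDiffAt.smul (hf.contDiffAt hξ))

variable [FiniteDimensional ℝ V]

theorem exists_hasSymbolBounds_highFrequency (d : ℝ) (C : ℕ → ℝ) :
    ∃ C', ∀ f : V → F, HasSymbolBounds d C f → HasSymbolBounds d C' (highFrequency f) := by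
  obtain ⟨C₀, hbump⟩ := HasSymbolBounds.exists_of_hasCompactSupport (unitBump V).contDiff
    (unitBump V).hasCompactSupport le_rfl
  exact ⟨_, fun f hf => hf.sub (g := lowFrequency f) (zero_add d ▸ hbump.smul hf)⟩

variable [MeasurableSpace V] [BorelSpace V] [Nontrivial V]

theorem HasSymbolBounds.aestronglyMeasurable (hf : HasSymbolBounds d C f) :
    AEStronglyMeasurable f := by
  rw [← restrict_compl_singleton (μ := volume) (0 : V)]
  exact hf.contDiffOn.continuousOn.aestronglyMeasurable (measurableSet_singleton 0).compl

theorem integrableOn_ball_norm_rpow (hd : -(finrank ℝ V : ℝ) < d) (r : ℝ) :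
    IntegrableOn (fun ξ : V => ‖ξ‖ ^ d) (Metric.ball 0 r) := by
  refine integrableOn_ball_of_norm_le_rpow finrank_pos (C := 1) (neg_lt.mp hd) (ae_of_all _ ?_) ?_
  · intro ξ
    simp [abs_of_nonneg, Real.rpow_nonneg]
  · exact (by fun_prop : Measurable fun ξ : V => ‖ξ‖ ^ d).aestronglyMeasurable

theorem HasSymbolBounds.ae_norm_le (hf : HasSymbolBounds d C f) :
    ∀ᵐ ξ, ‖f ξ‖ ≤ C 0 * ‖ξ‖ ^ d := by
  filter_upwards [Measure.ae_ne volume (0 : V)] with ξ hξ using hf.norm_le hξ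

theorem HasSymbolBounds.integrableOn_ball (hf : HasSymbolBounds d C f)
    (hd : -(finrank ℝ V : ℝ) < d) (r : ℝ) : IntegrableOn f (Metric.ball 0 r) :=
  ((integrableOn_ball_norm_rpow hd r).const_mul (C 0)).mono' hf.aestronglyMeasurable.restrict
    (ae_restrict_of_ae hf.ae_norm_le)

theorem HasSymbolBounds.integrable_lowFrequency (hf : HasSymbolBounds d C f)
    (hd : -(finrank ℝ V : ℝ) < d) : Integrable (lowFrequency f) :=
  ((integrable_indicator_iff measurableSet_ball).mpr (hf.integrableOn_ball hd 2).norm).mono'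
    ((unitBump V).continuous.aestronglyMeasurable.smul hf.aestronglyMeasurable)
    (ae_of_all _ (norm_lowFrequency_le_indicator f))

theorem HasSymbolBounds.integral_norm_lowFrequency_le (hf : HasSymbolBounds d C f)
    (hd : -(finrank ℝ V : ℝ) < d) :
    ∫ ξ, ‖lowFrequency f ξ‖ ≤ C 0 * ∫ ξ in Metric.ball (0 : V) 2, ‖ξ‖ ^ d :=
  have hball := (hf.integrableOn_ball hd 2).norm
  calc ∫ ξ, ‖lowFrequency f ξ‖
      ≤ ∫ ξ, (Metric.ball (0 : V) 2).indicator (fun ξ => ‖f ξ‖) ξ :=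
        integral_mono (hf.integrable_lowFrequency hd).norm
          ((integrable_indicator_iff measurableSet_ball).mpr hball)
          (norm_lowFrequency_le_indicator f)
    _ = ∫ ξ in Metric.ball (0 : V) 2, ‖f ξ‖ := integral_indicator measurableSet_ball
    _ ≤ ∫ ξ in Metric.ball (0 : V) 2, C 0 * ‖ξ‖ ^ d :=
        integral_mono_ae hball ((integrableOn_ball_norm_rpow hd 2).const_mul _)
          (ae_restrict_of_ae hf.ae_norm_le)
    _ = C 0 * ∫ ξ in Metric.ball (0 : V) 2, ‖ξ‖ ^ d := integral_const_mul _ _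

end FrequencySplitting

section Decay

variable {V F : Type*} [NormedAddCommGroup V] [InnerProductSpace ℝ V]
  [NormedAddCommGroup F] [NormedSpace ℝ F] {d : ℝ} {C : ℕ → ℝ} {g : V → F} {n : ℕ}

theorem rpow_le_two_rpow_mul_one_add_rpow {e r : ℝ} (he : e ≤ 0) (hr : 1 ≤ r) :
    r ^ e ≤ 2 ^ (-e) * (1 + r) ^ e :=
  calc r ^ e ≤ ((1 + r) / 2) ^ e :=
        Real.rpow_le_rpow_of_nonpos (by linarith) (by linarith) he
    _ = 2 ^ (-e) * (1 + r) ^ e := by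
        rw [Real.div_rpow (by linarith) zero_le_two, Real.rpow_neg zero_le_two, div_eq_inv_mul]

theorem HasSymbolBounds.norm_iteratedFDeriv_le_one_add_norm_rpow (hg : HasSymbolBounds d C g)
    (hzero : ∀ ξ, ‖ξ‖ ≤ 1 → g ξ = 0) (hdn : d - n ≤ 0) (ξ : V) :
    ‖iteratedFDeriv ℝ n g ξ‖ ≤ |C n| * 2 ^ (n - d) * (1 + ‖ξ‖) ^ (d - n) := by
  rcases lt_or_ge ‖ξ‖ 1 with hξ | hξ
  · have hlocal : g =ᶠ[𝓝 ξ] 0 := by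
      filter_upwards [Metric.isOpen_ball.mem_nhds (mem_ball_zero_iff.mpr hξ)] with η hη
      exact hzero η (mem_ball_zero_iff.mp hη).le
    rw [(hlocal.iteratedFDeriv ℝ n).eq_of_nhds, iteratedFDeriv_zero, Pi.zero_apply, norm_zero]
    positivity
  · calc ‖iteratedFDeriv ℝ n g ξ‖ ≤ C n * ‖ξ‖ ^ (d - n) :=
          hg.norm_iteratedFDeriv_le n ξ (norm_pos_iff.mp (one_pos.trans_le hξ))
      _ ≤ |C n| * (2 ^ (-(d - n)) * (1 + ‖ξ‖) ^ (d - n)) := by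
          gcongr
          · exact le_abs_self _
          · exact rpow_le_two_rpow_mul_one_add_rpow hdn hξ
      _ = |C n| * 2 ^ (n - d) * (1 + ‖ξ‖) ^ (d - n) := by rw [neg_sub, mul_assoc]

variable [FiniteDimensional ℝ V] [MeasurableSpace V] [BorelSpace V]

theorem integrable_one_add_norm_rpow {e : ℝ} (he : e < -finrank ℝ V) :
    Integrable fun ξ : V => (1 + ‖ξ‖) ^ e := by
  simpa only [neg_neg] using integrable_one_add_norm (lt_neg.mp he)

theorem HasSymbolBounds.integrable_iteratedFDeriv (hg : HasSymbolBounds d C g)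
    (hsm : ContDiff ℝ ∞ g) (hzero : ∀ ξ, ‖ξ‖ ≤ 1 → g ξ = 0) (hdn : d - n < -finrank ℝ V) :
    Integrable (iteratedFDeriv ℝ n g) :=
  ((integrable_one_add_norm_rpow hdn).const_mul _).mono'
    (hsm.continuous_iteratedFDeriv (mod_cast le_top)).aestronglyMeasurable
    (ae_of_all _ (hg.norm_iteratedFDeriv_le_one_add_norm_rpow hzero
      (hdn.le.trans (neg_nonpos.mpr (Nat.cast_nonneg _)))))

theorem HasSymbolBounds.integral_norm_iteratedFDeriv_le (hg : HasSymbolBounds d C g)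
    (hzero : ∀ ξ, ‖ξ‖ ≤ 1 → g ξ = 0) (hdn : d - n < -finrank ℝ V) :
    ∫ ξ, ‖iteratedFDeriv ℝ n g ξ‖ ≤ |C n| * 2 ^ (n - d) * ∫ ξ : V, (1 + ‖ξ‖) ^ (d - n) := by
  rw [← integral_const_mul]
  exact integral_mono_of_nonneg (ae_of_all _ fun _ => norm_nonneg _)
    ((integrable_one_add_norm_rpow hdn).const_mul _)
    (ae_of_all _ (hg.norm_iteratedFDeriv_le_one_add_norm_rpow hzero
      (hdn.le.trans (neg_nonpos.mpr (Nat.cast_nonneg _)))))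

end Decay

section FourierInverse

variable {V F : Type*} [NormedAddCommGroup V] [InnerProductSpace ℝ V] [FiniteDimensional ℝ V]
  [MeasurableSpace V] [BorelSpace V] [NormedAddCommGroup F] [NormedSpace ℂ F]

theorem norm_fourierInv_le_integral_norm (f : V → F) (w : V) : ‖𝓕⁻ f w‖ ≤ ∫ ξ, ‖f ξ‖ :=
  VectorFourier.norm_fourierIntegral_le_integral_norm _ _ _ _ _

theorem fourierInv_add_apply {f g : V → F} (hf : Integrable f) (hg : Integrable g) (w : V) :
    𝓕⁻ (f + g) w = 𝓕⁻ f w + 𝓕⁻ g w := by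
  have hcont : Continuous fun p : V × V => innerₗ V p.1 p.2 := continuous_inner
  simp only [Real.fourierInv_eq_fourier_neg]
  exact congrFun (VectorFourier.fourierIntegral_add Real.continuous_fourierChar hcont hf hg)
    (-w)

theorem two_pi_mul_norm_pow_mul_norm_fourierInv_le {f : V → F} (hf : ContDiff ℝ ∞ f)
    (hint : ∀ n : ℕ, Integrable (iteratedFDeriv ℝ n f)) (n : ℕ) (w : V) :
    (2 * Real.pi * ‖w‖) ^ n * ‖𝓕⁻ f w‖ ≤ ∫ ξ, ‖iteratedFDeriv ℝ n f ξ‖ := by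
  rcases eq_or_ne n 0 with rfl | hn
  · simpa using norm_fourierInv_le_integral_norm f w
  rcases eq_or_ne w 0 with rfl | hw
  · simpa [hn] using integral_nonneg fun ξ => norm_nonneg (iteratedFDeriv ℝ n f ξ)
  have hderiv : 𝓕⁻ (iteratedFDeriv ℝ n f) w (fun _ => w) =
      (-(2 * Real.pi * Complex.I)) ^ n • (‖w‖ ^ 2) ^ n • 𝓕⁻ f w := by
    rw [Real.fourierInv_eq_fourier_neg,
      Real.fourier_iteratedFDeriv hf (fun m _ => hint m) (mod_cast le_top)]
    simp [VectorFourier.fourierPowSMulRight_apply, Real.fourierInv_eq_fourier_neg,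
      innerSL_apply_apply ℝ w w]
  refine le_of_mul_le_mul_right ?_ (pow_pos (norm_pos_iff.mpr hw) n)
  calc (2 * Real.pi * ‖w‖) ^ n * ‖𝓕⁻ f w‖ * ‖w‖ ^ n
      = ‖𝓕⁻ (iteratedFDeriv ℝ n f) w (fun _ => w)‖ := by
        rw [hderiv, norm_smul, norm_smul]
        simp [abs_of_pos Real.pi_pos]
        ring
    _ ≤ ‖𝓕⁻ (iteratedFDeriv ℝ n f) w‖ * ‖w‖ ^ n := by
        simpa using (𝓕⁻ (iteratedFDeriv ℝ n f) w).le_opNorm fun _ => w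
    _ ≤ (∫ ξ, ‖iteratedFDeriv ℝ n f ξ‖) * ‖w‖ ^ n := by
        gcongr
        exact norm_fourierInv_le_integral_norm _ w

theorem fourierInv_rescale (d : ℝ) {R : ℝ} (hR : 0 < R) (f : V → F) (w : V) :
    𝓕⁻ (rescale d R f) w = R ^ (finrank ℝ V + d) • 𝓕⁻ f (R • w) := by
  have hintegrand (ξ : V) : Real.fourierChar (inner ℝ ξ w) • rescale d R f ξ =
      R ^ d • (Real.fourierChar (inner ℝ (R⁻¹ • ξ) (R • w)) • f (R⁻¹ • ξ)) := by
    rw [real_inner_smul_left, real_inner_smul_right, inv_mul_cancel_left₀ hR.ne', rescale,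
      smul_comm]
  simp_rw [Real.fourierInv_eq, hintegrand]
  rw [Measure.integral_comp_inv_smul_of_nonneg volume
      (fun ξ => R ^ d • (Real.fourierChar (inner ℝ ξ (R • w)) • f ξ)) hR.le, integral_smul,
    smul_smul, Real.rpow_add hR, Real.rpow_natCast]

end FourierInverse

section KernelDecay

variable {V F : Type*} [NormedAddCommGroup V] [InnerProductSpace ℝ V] [FiniteDimensional ℝ V]
  [MeasurableSpace V] [BorelSpace V] [NormedAddCommGroup F] [NormedSpace ℂ F]
  {d e : ℝ} {C C' : ℕ → ℝ} {f : V → F}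

theorem norm_fourierInv_le_of_eq_zero_of_norm_le_one {g : V → F} (hg : HasSymbolBounds d C g)
    (hg' : HasSymbolBounds e C' g) (he : e < -finrank ℝ V) (hsm : ContDiff ℝ ∞ g)
    (hzero : ∀ ξ, ‖ξ‖ ≤ 1 → g ξ = 0) {N : ℕ} (hN : d - N < -finrank ℝ V) {w : V}
    (hw : ‖w‖ = 1) :
    ‖𝓕⁻ g w‖ ≤ |C N| * 2 ^ (N - d) * ∫ ξ : V, (1 + ‖ξ‖) ^ (d - N) := by
  have hint (n : ℕ) : Integrable (iteratedFDeriv ℝ n g) :=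
    hg'.integrable_iteratedFDeriv hsm hzero ((sub_le_self e n.cast_nonneg).trans_lt he)
  have hpi : 1 ≤ 2 * Real.pi * ‖w‖ := by rw [hw]; linarith [Real.pi_gt_three]
  calc ‖𝓕⁻ g w‖ ≤ (2 * Real.pi * ‖w‖) ^ N * ‖𝓕⁻ g w‖ :=
        le_mul_of_one_le_left (norm_nonneg _) (one_le_pow₀ hpi)
    _ ≤ ∫ ξ, ‖iteratedFDeriv ℝ N g ξ‖ := two_pi_mul_norm_pow_mul_norm_fourierInv_le hsm hint N w
    _ ≤ |C N| * 2 ^ (N - d) * ∫ ξ : V, (1 + ‖ξ‖) ^ (d - N) :=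
        hg.integral_norm_iteratedFDeriv_le hzero hN

theorem HasSymbolBounds.integrable_highFrequency (hf : HasSymbolBounds e C f)
    (he : e < -finrank ℝ V) : Integrable (highFrequency f) := by
  obtain ⟨C', hhigh⟩ := exists_hasSymbolBounds_highFrequency (V := V) (F := F) e C
  refine (((hhigh f hf).integrable_iteratedFDeriv (n := 0) hf.contDiff_highFrequency
    (fun _ => highFrequency_eq_zero_of_norm_le_one f) (by simpa using he)).norm).mono'
    hf.contDiff_highFrequency.continuous.aestronglyMeasurable (ae_of_all _ fun ξ => ?_)
  rw [norm_iteratedFDeriv_zero]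

variable [Nontrivial V]

theorem exists_norm_fourierInv_le_of_norm_eq_one (hd : -(finrank ℝ V : ℝ) < d) (C : ℕ → ℝ) :
    ∃ A, ∀ (f : V → F) (e : ℝ) (C' : ℕ → ℝ), HasSymbolBounds d C f → e < -finrank ℝ V →
      HasSymbolBounds e C' f → ∀ w, ‖w‖ = 1 → ‖𝓕⁻ f w‖ ≤ A := by
  obtain ⟨Ch, hhigh⟩ := exists_hasSymbolBounds_highFrequency (V := V) (F := F) d C
  obtain ⟨N, hN⟩ := exists_nat_gt (d + finrank ℝ V)
  refine ⟨C 0 * (∫ ξ in Metric.ball (0 : V) 2, ‖ξ‖ ^ d) +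
    |Ch N| * 2 ^ (N - d) * ∫ ξ : V, (1 + ‖ξ‖) ^ (d - N), fun f e C' hf he hf' w hw => ?_⟩
  obtain ⟨Ch', hhigh'⟩ := exists_hasSymbolBounds_highFrequency (V := V) (F := F) e C'
  have hsplit : lowFrequency f + highFrequency f = f := add_sub_cancel _ _
  calc ‖𝓕⁻ f w‖ = ‖𝓕⁻ (lowFrequency f) w + 𝓕⁻ (highFrequency f) w‖ := by
        rw [← fourierInv_add_apply (hf.integrable_lowFrequency hd)
          (hf'.integrable_highFrequency he), hsplit]
    _ ≤ ‖𝓕⁻ (lowFrequency f) w‖ + ‖𝓕⁻ (highFrequency f) w‖ := norm_add_le _ _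
    _ ≤ _ := add_le_add
        ((norm_fourierInv_le_integral_norm _ w).trans (hf.integral_norm_lowFrequency_le hd))
        (norm_fourierInv_le_of_eq_zero_of_norm_le_one (hhigh f hf) (hhigh' f hf') he
          hf.contDiff_highFrequency (fun _ => highFrequency_eq_zero_of_norm_le_one f)
          (by linarith) hw)

theorem HasSymbolBounds.exists_norm_fourierInv_le_norm_rpow (hf : HasSymbolBounds d C f)
    (hd : -(finrank ℝ V : ℝ) < d) (hf' : HasSymbolBounds e C' f) (he : e < -finrank ℝ V) :
    ∃ A, ∀ x ≠ 0, ‖𝓕⁻ f x‖ ≤ A * ‖x‖ ^ (-(finrank ℝ V + d)) := by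
  obtain ⟨A, hA⟩ := exists_norm_fourierInv_le_of_norm_eq_one (V := V) (F := F) hd C
  refine ⟨A, fun x hx => ?_⟩
  have hpos : 0 < ‖x‖ := norm_pos_iff.mpr hx
  have hqual : HasSymbolBounds e _ (rescale d ‖x‖ f) :=
    rescale_eq_rpow_smul_rescale d e hpos f ▸ (hf'.rescale hpos).const_smul _
  have hsphere : ‖𝓕⁻ (rescale d ‖x‖ f) (‖x‖⁻¹ • x)‖ ≤ A :=
    hA _ e _ (hf.rescale hpos) he hqual _ (by simp [norm_smul, hpos.ne'])
  rw [fourierInv_rescale d hpos, smul_inv_smul₀ hpos.ne', norm_smul,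
    Real.norm_of_nonneg (by positivity)] at hsphere
  rwa [Real.rpow_neg hpos.le, ← div_eq_mul_inv, le_div_iff₀' (by positivity)]

theorem HasSymbolBounds.exists_norm_fourierInv_le (hf : HasSymbolBounds d C f)
    (hd : -(finrank ℝ V : ℝ) < d) (hf' : HasSymbolBounds e C' f) (he : e < -finrank ℝ V) :
    ∃ A > 0, ∀ x, ‖𝓕⁻ f x‖ ≤ A * (1 + ‖x‖) ^ (-(finrank ℝ V + d)) := by
  obtain ⟨A, hA⟩ := hf.exists_norm_fourierInv_le_norm_rpow hd hf' he
  set s : ℝ := finrank ℝ V + d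
  have hs : -s ≤ 0 := by simp only [s]; linarith
  set B : ℝ := max 1 (max A (∫ ξ, ‖f ξ‖))
  have hAB : A ≤ B := (le_max_left _ _).trans (le_max_right _ _)
  have hIB : ∫ ξ, ‖f ξ‖ ≤ B := (le_max_right _ _).trans (le_max_right _ _)
  have hB : 0 < B := one_pos.trans_le (le_max_left _ _)
  refine ⟨B * 2 ^ s, mul_pos hB (Real.rpow_pos_of_pos two_pos s), fun x => ?_⟩
  have hmax : ‖𝓕⁻ f x‖ ≤ B * max 1 ‖x‖ ^ (-s) := by
    rcases le_total ‖x‖ 1 with hx | hx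
    · rw [max_eq_left hx, Real.one_rpow, mul_one]
      exact (norm_fourierInv_le_integral_norm f x).trans hIB
    · rw [max_eq_right hx]
      refine (hA x (norm_pos_iff.mp (one_pos.trans_le hx))).trans ?_
      gcongr
  calc ‖𝓕⁻ f x‖ ≤ B * max 1 ‖x‖ ^ (-s) := hmax
    _ ≤ B * (2 ^ (- -s) * (1 + max 1 ‖x‖) ^ (-s)) := by
        gcongr
        exact rpow_le_two_rpow_mul_one_add_rpow hs (le_max_left _ _)
    _ ≤ B * 2 ^ s * (1 + ‖x‖) ^ (-s) := by
        rw [neg_neg, mul_assoc]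
        gcongr B * (_ * ?_)
        exact Real.rpow_le_rpow_of_nonpos (by positivity)
          (add_le_add_right (le_max_right _ _) _) hs

theorem multiplier_kernel_decay_general {p : ℝ} (hp : 0 < p) (hd : -(finrank ℝ V : ℝ) < d)
    {h : V → F} (hsm : ContDiffOn ℝ ∞ h {0}ᶜ)
    (hhom : ∀ c : ℝ, 0 < c → ∀ ξ ≠ 0, h (c • ξ) = c ^ d • h ξ) :
    ∃ C > 0, ∀ x : V, ‖𝓕⁻ (fun ξ => Real.exp (-‖ξ‖ ^ p) • h ξ) x‖ ≤
      C * (1 + ‖x‖) ^ (-(finrank ℝ V + d)) := by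
  obtain ⟨Ch, hh⟩ := HasSymbolBounds.exists_of_homogeneous hsm hhom
  obtain ⟨C₀, h₀⟩ := exists_hasSymbolBounds_exp_neg_norm_rpow (V := V) hp le_rfl
  have hneg : -(finrank ℝ V : ℝ) - d - 1 ≤ 0 := by linarith
  obtain ⟨C₁, h₁⟩ := exists_hasSymbolBounds_exp_neg_norm_rpow (V := V) hp hneg
  exact HasSymbolBounds.exists_norm_fourierInv_le (zero_add d ▸ h₀.smul hh) hd (h₁.smul hh)
    (by linarith)

end KernelDecay

/-- The factor `(iξ)^γ |ξ|^β P(ξ)` of the multiplier `mSymb`, without the exponential damping. -/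
def homogeneousSymbol (γ : Fin 2 → ℕ) (β : ℝ) (P : E2 → ℂ) (ξ : E2) : ℂ :=
  (∏ i : Fin 2, (Complex.I * (ξ i : ℂ)) ^ γ i) * ((‖ξ‖ ^ β : ℝ) : ℂ) * P ξ

theorem mSymb_eq_exp_smul_homogeneousSymbol (γ : Fin 2 → ℕ) (β α : ℝ) (P : E2 → ℂ) :
    mSymb γ β α P = fun ξ => Real.exp (-‖ξ‖ ^ (2 * α)) • homogeneousSymbol γ β P ξ := by
  ext ξ
  rw [mSymb, homogeneousSymbol, Complex.real_smul, Complex.ofReal_exp, Complex.ofReal_neg,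
    mul_comm]

theorem contDiffOn_homogeneousSymbol (γ : Fin 2 → ℕ) (β : ℝ) {P : E2 → ℂ}
    (hP : ContDiffOn ℝ ∞ P {0}ᶜ) : ContDiffOn ℝ ∞ (homogeneousSymbol γ β P) {0}ᶜ := by
  have hmonomial : ContDiff ℝ ∞ fun ξ : E2 => ∏ i : Fin 2, (Complex.I * (ξ i : ℂ)) ^ γ i :=
    contDiff_prod fun i _ => (contDiff_const.mul
      (Complex.ofRealCLM.contDiff.comp (EuclideanSpace.proj (𝕜 := ℝ) i).contDiff)).pow _
  exact (hmonomial.contDiffOn.mul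
    (Complex.ofRealCLM.contDiff.comp_contDiffOn (contDiffOn_norm_rpow β))).mul hP

theorem homogeneousSymbol_smul (γ : Fin 2 → ℕ) (β : ℝ) {P : E2 → ℂ}
    (hP : ∀ c : ℝ, 0 < c → ∀ ξ, P (c • ξ) = P ξ) {c : ℝ} (hc : 0 < c) (ξ : E2) :
    homogeneousSymbol γ β P (c • ξ) =
      c ^ (β + (γ 0 + γ 1 : ℕ)) • homogeneousSymbol γ β P ξ := by
  simp only [homogeneousSymbol, hP c hc ξ, norm_smul, Real.norm_of_nonneg hc.le,
    Real.mul_rpow hc.le (norm_nonneg ξ), Real.rpow_add hc, Real.rpow_natCast, Fin.prod_univ_two,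
    PiLp.smul_apply, smul_eq_mul, Complex.real_smul]
  push_cast
  ring

/-- Littlewood–Paley kernel estimate: if `P` is smooth away from 0,
homogeneous of degree 0, `α > 0`, `|γ| = k`, and `β + k > −2`, then
`K = 𝓕⁻¹(m)` satisfies `|K(x)| ≤ C (1+|x|)^{−(2+β+k)}`. -/
theorem multiplier_kernel_decay (α β : ℝ) (hα : 0 < α)
    (γ : Fin 2 → ℕ) (k : ℕ) (hk : γ 0 + γ 1 = k) (hβk : -2 < β + k)
    (P : E2 → ℂ)
    (hPsm : ContDiffOn ℝ (⊤ : ℕ∞) P {(0 : E2)}ᶜ)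
    (hPhom : ∀ c : ℝ, 0 < c → ∀ ξ : E2, P (c • ξ) = P ξ) :
    ∃ C > 0, ∀ x : E2,
      ‖𝓕⁻ (mSymb γ β α P) x‖ ≤ C * (1 + ‖x‖) ^ (-(2 + β + (k : ℝ))) := by
  subst hk
  simpa [mSymb_eq_exp_smul_homogeneousSymbol, add_assoc] using
    multiplier_kernel_decay_general (mul_pos two_pos hα) (by simpa using hβk)
      (contDiffOn_homogeneousSymbol γ β hPsm)
      fun c hc ξ _ => homogeneousSymbol_smul γ β hPhom hc ξ
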